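/- Let K be an algebraically closed field of characteristic zero and let α ∈ K satisfy α² − α + 2 = 0. Then the polynomial A₂₁ = x₁⁵ + (α+1)x₁⁴x₂ + 2α·x₁³x₂² + (10α+18)x₁³ + (2α−2)x₁²x₂³ + (32α−8)x₁²x₂ + (20α+4)x₁² + (α−2)x₁x₂⁴ + (32α−24)x₁x₂² + (32α−16)x₁x₂ + (107α+55)x₁ − x₂⁵ + (10α−28)x₂³ + (20α−24)x₂² + (107α−162)x₂ + 136α − 68 is irreducible in K[x₁,x₂]. -/

import Mathlib

/-!
Grade by total degree: substituting `x₁ = X t`, `x₂ = t` turns a bivariate polynomial into a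
polynomial in `t` whose `i`-th coefficient is its homogeneous part of degree `i`, dehomogenised at
`x₂ = 1`. Suppose `A₂₁ = G H` with top parts `g`, `h` of degrees `r ≤ s`, `r + s = 5`.

* The top part `T = g h` of `A₂₁` is squarefree (`topForm_separable`), so `g` and `h` are coprime.
  As `A₂₁` has no part of degree 4, `g` divides the next part of `G`, which has smaller degree and
  hence vanishes; the same then holds for `H`.
* If `r = 1`, the constant term of `G` vanishes, but that of `A₂₁` is `136 α - 68 ≠ 0`.
* If `r = 2`, comparing the parts of degree 2 shows that `g` divides the quadratic part of `A₂₁`.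
  But `g` also divides `T`, and the two are coprime (`topForm_isCoprime_quadForm`).

Both coprimality statements are explicit Bézout identities over `ℤ[α]`, with right-hand sides `21`
and `84`.
-/

namespace A21

open Polynomial

variable {K : Type*} [Field K]

/-- The substitution `x₁ ↦ X t`, `x₂ ↦ t`, with values in `K[X][t]`; the coefficient of `t ^ i` is
the homogeneous part of degree `i`, dehomogenised at `x₂ = 1`. -/
noncomputable def grade : MvPolynomial (Fin 2) K →ₐ[K] K[X][X] :=
  MvPolynomial.aeval ![C X * X, X]

/-- The top homogeneous part of `A₂₁`, dehomogenised. -/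
noncomputable def topForm (α : K) : K[X] :=
  X ^ 5 + C (α + 1) * X ^ 4 + C (2 * α) * X ^ 3 + C (2 * α - 2) * X ^ 2 + C (α - 2) * X - 1

/-- The homogeneous part of degree 2 of `A₂₁`, dehomogenised. -/
noncomputable def quadForm (α : K) : K[X] :=
  C (20 * α + 4) * X ^ 2 + C (32 * α - 16) * X + C (20 * α - 24)

/-- The coefficient of `X ^ a * t ^ i` in `grade p` is that of `x₁ ^ a * x₂ ^ (i - a)` in `p`,
and zero when `i < a`. -/
theorem coeff_coeff_grade (p : MvPolynomial (Fin 2) K) (i a : ℕ) :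
    ((grade p).coeff i).coeff a =
      if a ≤ i then p.coeff (Finsupp.single 0 a + Finsupp.single 1 (i - a)) else 0 := by
  induction p using MvPolynomial.induction_on' with
  | add p q hp hq =>
    simp only [map_add, coeff_add, hp, hq, MvPolynomial.coeff_add]
    split_ifs <;> simp
  | monomial u c =>
    have h : grade (MvPolynomial.monomial u c) =
        monomial (u 0 + u 1) (monomial (u 0) c : K[X]) := by
      rw [grade, MvPolynomial.aeval_monomial, Finsupp.prod_fintype _ _ (by simp),
        Fin.prod_univ_two, ← C_mul_X_pow_eq_monomial, ← C_mul_X_pow_eq_monomial]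
      simp only [Matrix.cons_val_zero, Matrix.cons_val_one, map_mul, map_pow, mul_pow, pow_add,
        Polynomial.algebraMap_eq, Polynomial.algebraMap_apply]
      ring
    have key : u = Finsupp.single 0 a + Finsupp.single 1 (i - a) ↔ u 0 = a ∧ u 1 = i - a := by
      constructor
      · intro h; rw [h]; simp
      · rintro ⟨h0, h1⟩
        ext j
        fin_cases j <;> simp [h0, h1]
    rw [h, coeff_monomial, MvPolynomial.coeff_monomial]
    simp only [key]
    by_cases h1 : u 0 + u 1 = i
    · rw [if_pos h1, coeff_monomial]
      by_cases h2 : u 0 = a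
      · have h3 : a ≤ i := by omega
        have h4 : u 1 = i - a := by omega
        simp [h2, h3, h4]
      · simp [h2]
    · rw [if_neg h1]
      by_cases h2 : a ≤ i
      · rw [if_pos h2, if_neg (by omega)]; simp
      · rw [if_neg h2]; simp

theorem natDegree_coeff_grade_le (p : MvPolynomial (Fin 2) K) (i : ℕ) :
    ((grade p).coeff i).natDegree ≤ i := by
  rw [natDegree_le_iff_coeff_eq_zero]
  intro a ha
  rw [coeff_coeff_grade, if_neg (by omega)]

/-- A nonzero polynomial without homogeneous parts of positive degree is a nonzero constant. -/
theorem isUnit_of_natDegree_grade {p : MvPolynomial (Fin 2) K} (hp : p ≠ 0)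
    (h : (grade p).natDegree = 0) : IsUnit p := by
  have hC : p = MvPolynomial.C (p.coeff 0) := by
    ext m
    rw [MvPolynomial.coeff_C]
    split_ifs with hm
    · rw [hm]
    · have h2 := coeff_coeff_grade p (m 0 + m 1) (m 0)
      have hm' : m 0 + m 1 ≠ 0 := by
        intro h0
        apply hm
        ext j
        fin_cases j <;> simp <;> omega
      rw [coeff_eq_zero_of_natDegree_lt (p := grade p) (by omega), if_pos (by omega),
        coeff_zero] at h2
      rw [h2]
      congr 1
      ext j
      fin_cases j <;> simp
  rw [hC]
  refine (IsUnit.mk0 _ fun h0 => hp ?_).map MvPolynomial.C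
  rw [hC, h0, map_zero]

theorem topForm_separable [CharZero K] (α : K) (hα : α ^ 2 - α + 2 = 0) :
    (topForm α).Separable := by
  have ha : (C α : K[X]) ^ 2 - C α + 2 = 0 := by
    have := congrArg (C : K → K[X]) hα
    simpa [map_ofNat] using this
  have h21 : (C (21⁻¹ : K) : K[X]) * 21 = 1 := by
    have : (21 : K[X]) = C 21 := (map_ofNat C 21).symm
    rw [this, ← C_mul, inv_mul_cancel₀ (by norm_num), C_1]
  have hd : derivative (topForm α) = 5 * X ^ 4 + 4 * (C α + 1) * X ^ 3 + 6 * C α * X ^ 2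
      + 2 * (2 * C α - 2) * X + (C α - 2) := by
    simp [topForm, map_ofNat]
    ring
  refine ⟨C 21⁻¹ * ((-73 - 64 * C α) + (-132 - 128 * C α) * X + (-294 + 70 * C α) * X ^ 2
      + (-340 + 120 * C α) * X ^ 3),
    C 21⁻¹ * ((-19 + 45 * C α) + (9 + 52 * C α) * X + (70 + 42 * C α) * X ^ 2
      + (82 - 10 * C α) * X ^ 3 + (68 - 24 * C α) * X ^ 4), ?_⟩
  rw [hd, topForm]
  simp only [C_add, C_sub, C_mul, C_1, map_ofNat C]
  linear_combination h21 + C 21⁻¹ * (45 + 168 * X + 264 * X ^ 2 + 336 * X ^ 3 + 336 * X ^ 4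
    + 264 * X ^ 5 + 126 * X ^ 6 + 24 * X ^ 7) * ha

theorem topForm_isCoprime_quadForm [CharZero K] (α : K) (hα : α ^ 2 - α + 2 = 0) :
    IsCoprime (topForm α) (quadForm α) := by
  have ha : (C α : K[X]) ^ 2 - C α + 2 = 0 := by
    have := congrArg (C : K → K[X]) hα
    simpa [map_ofNat] using this
  have h84 : (C (84⁻¹ : K) : K[X]) * 84 = 1 := by
    have : (84 : K[X]) = C 84 := (map_ofNat C 84).symm
    rw [this, ← C_mul, inv_mul_cancel₀ (by norm_num), C_1]
  refine ⟨C 84⁻¹ * ((-812 - 700 * C α) + (-336 - 784 * C α) * X),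
    C 84⁻¹ * ((-28 + 35 * C α) + (-8 + 44 * C α) * X + (31 + 43 * C α) * X ^ 2
      + (57 + 5 * C α) * X ^ 3 + (44 - 4 * C α) * X ^ 4), ?_⟩
  rw [topForm, quadForm]
  simp only [C_add, C_sub, C_mul, C_1, map_ofNat C]
  linear_combination h84 + C 84⁻¹ * (700 + 1300 * X + 784 * X ^ 2 - 612 * X ^ 3 - 1328 * X ^ 4
    - 812 * X ^ 5 - 80 * X ^ 6) * ha

theorem natDegree_topForm (α : K) : (topForm α).natDegree = 5 := by
  rw [topForm]
  compute_degree!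

/-- The factorisation argument, for a product in `K[X][t]` of two polynomials whose `i`-th
coefficients have degree at most `i`. The factors have `t`-degrees `r` and `s` with `r ≤ s`. -/
theorem no_factorization [CharZero K] (α : K) (hα : α ^ 2 - α + 2 = 0) (G H : K[X][X]) (r s : ℕ)
    (hG : ∀ i, (G.coeff i).natDegree ≤ i) (hH : ∀ i, (H.coeff i).natDegree ≤ i)
    (hr : G.natDegree = r) (hs : H.natDegree = s) (hr0 : r ≠ 0) (hrs : r ≤ s)
    (h5 : (G * H).natDegree = 5) (c5 : (G * H).coeff 5 = topForm α) (c4 : (G * H).coeff 4 = 0)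
    (c2 : (G * H).coeff 2 = quadForm α) (c0 : (G * H).coeff 0 ≠ 0) : False := by
  have hGH : G * H ≠ 0 := fun h => c0 (by simp [h])
  have hsum : r + s = 5 := by
    rw [← h5, natDegree_mul (left_ne_zero_of_mul hGH) (right_ne_zero_of_mul hGH), hr, hs]
  have hGz : ∀ i, r < i → G.coeff i = 0 := fun i hi =>
    coeff_eq_zero_of_natDegree_lt (by omega)
  have hHz : ∀ i, s < i → H.coeff i = 0 := fun i hi =>
    coeff_eq_zero_of_natDegree_lt (by omega)
  have htop : G.coeff r * H.coeff s = topForm α := by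
    rw [← c5, ← hsum]
    subst hr hs
    rw [coeff_mul_degree_add_degree]
    rfl
  have hT0 : topForm α ≠ 0 := fun h => by
    have := natDegree_topForm α
    simp [h] at this
  have hg0 : G.coeff r ≠ 0 := fun h => hT0 (by rw [← htop, h, zero_mul])
  have hh0 : H.coeff s ≠ 0 := fun h => hT0 (by rw [← htop, h, mul_zero])
  have hdeg : (G.coeff r).natDegree = r := by
    have h1 := natDegree_mul hg0 hh0
    rw [htop, natDegree_topForm] at h1
    have := hG r
    have := hH s
    omega
  have hcop : IsCoprime (G.coeff r) (H.coeff s) :=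
    Polynomial.Separable.isCoprime (htop ▸ topForm_separable α hα)
  have hnext : G.coeff (r - 1) * H.coeff s + G.coeff r * H.coeff (s - 1) = 0 := by
    rw [coeff_mul, Finset.Nat.sum_antidiagonal_eq_sum_range_succ_mk] at c4
    have hr2 : r = 1 ∨ r = 2 := by omega
    rcases hr2 with rfl | rfl
    · obtain rfl : s = 4 := by omega
      simpa [Finset.sum_range_succ, hGz] using c4
    · obtain rfl : s = 3 := by omega
      simpa [Finset.sum_range_succ, hGz, hHz] using c4
  have hGnext : G.coeff (r - 1) = 0 := by
    have hdvd : G.coeff r ∣ G.coeff (r - 1) :=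
      hcop.dvd_of_dvd_mul_right ⟨-H.coeff (s - 1), by linear_combination hnext⟩
    refine eq_zero_of_dvd_of_natDegree_lt hdvd ?_
    have := hG (r - 1)
    omega
  have hHnext : H.coeff (s - 1) = 0 := by
    rw [hGnext, zero_mul, zero_add] at hnext
    exact (mul_eq_zero.mp hnext).resolve_left hg0
  have hr2 : r = 1 ∨ r = 2 := by omega
  rcases hr2 with rfl | rfl
  · apply c0
    rw [mul_coeff_zero]
    rw [show G.coeff 0 = 0 from hGnext, zero_mul]
  · obtain rfl : s = 3 := by omega
    have hquad : G.coeff 2 * H.coeff 0 = quadForm α := by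
      rw [← c2, coeff_mul, Finset.Nat.sum_antidiagonal_eq_sum_range_succ_mk]
      have h1 : G.coeff 1 = 0 := hGnext
      have h2 : H.coeff 2 = 0 := hHnext
      simp [Finset.sum_range_succ, h1, h2]
    have hu : IsUnit (G.coeff 2) :=
      (topForm_isCoprime_quadForm α hα).isUnit_of_dvd' ⟨_, htop.symm⟩ ⟨_, hquad.symm⟩
    have := natDegree_eq_zero_of_isUnit hu
    omega

/-- Only the parts of degrees 5, 4, 2 and 0 of `A₂₁` matter for irreducibility: those of degrees
3 and 1, here `F3` and `F1`, are arbitrary. -/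
theorem irreducible_of_grade [CharZero K] (α : K) (hα : α ^ 2 - α + 2 = 0)
    (F : MvPolynomial (Fin 2) K) (F3 F1 : K[X])
    (hF : grade F = C (topForm α) * X ^ 5 + C F3 * X ^ 3 + C (quadForm α) * X ^ 2 + C F1 * X
      + C (C (136 * α - 68))) :
    Irreducible F := by
  have hT0 : topForm α ≠ 0 := fun h => by
    have := natDegree_topForm α
    simp [h] at this
  have h5 : (grade F).natDegree = 5 := by
    rw [hF]
    compute_degree!
  have c5 : (grade F).coeff 5 = topForm α := by
    rw [hF]
    simp
  have c4 : (grade F).coeff 4 = 0 := by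
    rw [hF]
    simp
  have c2 : (grade F).coeff 2 = quadForm α := by
    rw [hF]
    simp
  have c0 : (grade F).coeff 0 ≠ 0 := by
    have h : (grade F).coeff 0 = C (136 * α - 68) := by
      rw [hF]; simp
    rw [h, C_ne_zero]
    intro h0
    -- `α = 1/2` would give `α ^ 2 - α + 2 = 7/4`
    have h7 : (7 : K) = 0 := by
      linear_combination 4 * hα - (2 * α - 1) / 68 * h0
    norm_num at h7
  have hF0 : F ≠ 0 := fun h => c0 (by rw [h]; simp)
  refine ⟨fun hu => ?_, fun G H hGH => ?_⟩
  · have := natDegree_eq_zero_of_isUnit (hu.map grade)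
    omega
  · rw [hGH] at hF0
    by_contra! hcon
    have hr : (grade G).natDegree ≠ 0 := fun h =>
      hcon.1 (isUnit_of_natDegree_grade (left_ne_zero_of_mul hF0) h)
    have hs : (grade H).natDegree ≠ 0 := fun h =>
      hcon.2 (isUnit_of_natDegree_grade (right_ne_zero_of_mul hF0) h)
    rw [hGH, map_mul] at h5 c5 c4 c2 c0
    rcases le_total (grade G).natDegree (grade H).natDegree with hle | hle
    · exact no_factorization α hα _ _ _ _ (natDegree_coeff_grade_le G)
        (natDegree_coeff_grade_le H) rfl rfl hr hle h5 c5 c4 c2 c0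
    · rw [mul_comm] at h5 c5 c4 c2 c0
      exact no_factorization α hα _ _ _ _ (natDegree_coeff_grade_le H)
        (natDegree_coeff_grade_le G) rfl rfl hs hle h5 c5 c4 c2 c0

end A21

open MvPolynomial in
/-- Let `K` be an algebraically closed field of characteristic
zero and let `α ∈ K` satisfy `α² − α + 2 = 0`.  Then the factor `A₂₁` of
`f₂₁(x₁) − f₂₁^σ(x₂)` is irreducible in `K[x₁,x₂]`. -/
theorem A₂₁_irreducible
    {K : Type*} [Field K] [CharZero K] [IsAlgClosed K] (α : K)
    (hα : α^2 - α + 2 = 0) :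
    Irreducible
      (X 0 ^ 5 + C (α + 1) * X 0 ^ 4 * X 1 + C (2*α) * X 0 ^ 3 * X 1 ^ 2
        + C (10*α + 18) * X 0 ^ 3 + C (2*α - 2) * X 0 ^ 2 * X 1 ^ 3
        + C (32*α - 8) * X 0 ^ 2 * X 1 + C (20*α + 4) * X 0 ^ 2
        + C (α - 2) * X 0 * X 1 ^ 4 + C (32*α - 24) * X 0 * X 1 ^ 2
        + C (32*α - 16) * X 0 * X 1 + C (107*α + 55) * X 0 - X 1 ^ 5
        + C (10*α - 28) * X 1 ^ 3 + C (20*α - 24) * X 1 ^ 2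
        + C (107*α - 162) * X 1 + C (136*α - 68) : MvPolynomial (Fin 2) K) := by
  -- the explicit arguments are the dehomogenised parts of degrees 3 and 1
  refine A21.irreducible_of_grade α hα _
    (Polynomial.C (10*α + 18) * Polynomial.X ^ 3 + Polynomial.C (32*α - 8) * Polynomial.X ^ 2
      + Polynomial.C (32*α - 24) * Polynomial.X + Polynomial.C (10*α - 28))
    (Polynomial.C (107*α + 55) * Polynomial.X + Polynomial.C (107*α - 162)) ?_
  have hC : ∀ c : K, A21.grade (C c) = Polynomial.C (Polynomial.C c) := fun c => by
    rw [A21.grade, aeval_C]; rfl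
  have h0 : A21.grade (X 0 : MvPolynomial (Fin 2) K) =
      Polynomial.C Polynomial.X * Polynomial.X := by simp [A21.grade]
  have h1 : A21.grade (X 1 : MvPolynomial (Fin 2) K) = Polynomial.X := by simp [A21.grade]
  simp only [map_add, map_sub, map_mul, map_pow, h0, h1, hC, A21.topForm,
    A21.quadForm, Polynomial.C_1]
  ring
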